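/- Let X be a reflexive real Banach space, Y a real normed space, and T, A : X → Y compact linear operators such that M_T = D ∪ (−D), where D is a nonempty compact connected subset of the unit sphere S_X. Let ε ∈ [0,1). Then T ⊥_B^ε A if and only if there exists x ∈ M_T such that ‖Tx + λAx‖² ≥ ‖T‖² − 2ε‖T‖‖λA‖ for all real λ. -/

import Mathlib

open Filter Topology

lemma aux_weak_limit {X : Type*} [NormedAddCommGroup X] [NormedSpace ℝ X]
    (hrefl : Function.Surjective (NormedSpace.inclusionInDoubleDual ℝ X))
    (U : Ultrafilter ℕ) (x : ℕ → X) (hx : ∀ n, ‖x n‖ ≤ 1) :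
    ∃ z : X, ‖z‖ ≤ 1 ∧ ∀ f : StrongDual ℝ X, Tendsto (fun n => f (x n)) U (𝓝 (f z)) := by
  have hc := WeakDual.isCompact_closedBall (𝕜 := ℝ) (E := StrongDual ℝ X) 0 1
  let w : ℕ → WeakDual ℝ (StrongDual ℝ X) :=
    fun n => StrongDual.toWeakDual (NormedSpace.inclusionInDoubleDual ℝ X (x n))
  obtain ⟨φ, hφ, hlim⟩ := hc.ultrafilter_le_nhds (U.map w) (by
    rw [le_principal_iff, Ultrafilter.mem_coe, Ultrafilter.mem_map]
    refine Filter.Eventually.of_forall (f := (U : Filter ℕ)) (fun n => ?_)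
    simp only [Set.mem_preimage, Metric.mem_closedBall, dist_zero_right]
    exact (NormedSpace.double_dual_bound ℝ X (x n)).trans (hx n))
  obtain ⟨z, hz⟩ := hrefl (WeakDual.toStrongDual φ)
  refine ⟨z, ?_, fun f => ?_⟩
  · have h1 : ‖WeakDual.toStrongDual φ‖ ≤ 1 := by simpa using hφ
    rw [← hz] at h1
    have := (NormedSpace.inclusionInDoubleDualLi (E := X) ℝ).norm_map z
    rw [← this]
    exact h1
  · have h2 : Tendsto w U (𝓝 φ) := hlim
    have h3 := ((WeakDual.eval_continuous f).tendsto φ).comp h2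
    have h4 : φ f = f z := by
      have := congrArg (fun g => g f) hz
      simpa using this.symm
    rw [h4] at h3
    exact h3

lemma aux_compact_limit {X Y : Type*} [NormedAddCommGroup X] [NormedSpace ℝ X]
    [NormedAddCommGroup Y] [NormedSpace ℝ Y]
    (T : X →L[ℝ] Y) (hT : IsCompactOperator T)
    (U : Ultrafilter ℕ) (x : ℕ → X) (hx : ∀ n, ‖x n‖ ≤ 1) (z : X)
    (hz : ∀ f : StrongDual ℝ X, Tendsto (fun n => f (x n)) U (𝓝 (f z))) :
    Tendsto (fun n => T (x n)) U (𝓝 (T z)) := by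
  obtain ⟨K, hK, hKT⟩ :=
    IsCompactOperator.image_closedBall_subset_compact (f := (T : X →ₗ[ℝ] Y)) hT 1
  obtain ⟨y, -, hlim⟩ := hK.ultrafilter_le_nhds (U.map (fun n => T (x n))) (by
    rw [le_principal_iff, Ultrafilter.mem_coe, Ultrafilter.mem_map]
    refine Filter.Eventually.of_forall (f := (U : Filter ℕ)) (fun n => ?_)
    exact hKT ⟨x n, by simpa using hx n, rfl⟩)
  have h2 : Tendsto (fun n => T (x n)) U (𝓝 y) := hlim
  have : y = T z := by
    rw [SeparatingDual.eq_iff_forall_dual_eq (R := ℝ)]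
    intro g
    exact tendsto_nhds_unique ((g.continuous.tendsto y).comp h2) (hz (g.comp T))
  rwa [this] at h2

lemma aux_near_max {X Y : Type*} [NormedAddCommGroup X] [NormedSpace ℝ X]
    [NormedAddCommGroup Y] [NormedSpace ℝ Y] (C : X →L[ℝ] Y) (δ : ℝ) (hδ : 0 < δ) :
    ∃ x : X, ‖x‖ ≤ 1 ∧ ‖C‖ ^ 2 - δ ≤ ‖C x‖ ^ 2 := by
  rcases (norm_nonneg C).eq_or_lt with h | h
  · refine ⟨0, by simp, ?_⟩
    rw [← h]; simp; linarith
  · have : Real.sqrt (‖C‖ ^ 2 - δ) < ‖C‖ := by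
      rw [Real.sqrt_lt' h]; linarith
    obtain ⟨x, hx, hx2⟩ := C.exists_lt_apply_of_lt_opNorm this
    exact ⟨x, hx.le, (Real.lt_sq_of_sqrt_lt hx2).le⟩

lemma aux_convex {Y : Type*} [NormedAddCommGroup Y] [NormedSpace ℝ Y] (u v : Y)
    (s l : ℝ) (hs : 0 < s) (hsl : s ≤ l) :
    l * ‖u + s • v‖ ^ 2 ≤ (l - s) * ‖u‖ ^ 2 + s * ‖u + l • v‖ ^ 2 := by
  have hl : 0 < l := by linarith
  have h1 : l * ‖u + s • v‖ ≤ (l - s) * ‖u‖ + s * ‖u + l • v‖ := by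
    have e : l • (u + s • v) = (l - s) • u + s • (u + l • v) := by module
    have := norm_add_le ((l - s) • u) (s • (u + l • v))
    rw [← e] at this
    simpa only [norm_smul, Real.norm_eq_abs, abs_of_pos hl, abs_of_pos hs,
      abs_of_nonneg (sub_nonneg.2 hsl)] using this
  have h2 : (l * ‖u + s • v‖) ^ 2 ≤ ((l - s) * ‖u‖ + s * ‖u + l • v‖) ^ 2 := by gcongr
  have h3 : l * (l * ‖u + s • v‖ ^ 2) ≤
      l * ((l - s) * ‖u‖ ^ 2 + s * ‖u + l • v‖ ^ 2) := by
    have : 0 ≤ (l - s) * s * (‖u‖ - ‖u + l • v‖) ^ 2 :=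
      mul_nonneg (mul_nonneg (sub_nonneg.2 hsl) hs.le) (sq_nonneg _)
    nlinarith
  exact le_of_mul_le_mul_left h3 hl

lemma aux_half {X Y : Type*} [NormedAddCommGroup X] [NormedSpace ℝ X]
    [NormedAddCommGroup Y] [NormedSpace ℝ Y]
    (hrefl : Function.Surjective (NormedSpace.inclusionInDoubleDual ℝ X))
    (T A : X →L[ℝ] Y) (hT : IsCompactOperator T) (hA : IsCompactOperator A)
    (hT0 : 0 < ‖T‖) (c : ℝ) (h : ∀ l : ℝ, 0 ≤ l → ‖T‖ ^ 2 - c * l ≤ ‖T + l • A‖ ^ 2) :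
    ∃ x : X, ‖x‖ = 1 ∧ ‖T x‖ = ‖T‖ ∧
      ∀ l : ℝ, 0 ≤ l → ‖T‖ ^ 2 - c * l ≤ ‖T x + l • A x‖ ^ 2 := by
  let s : ℕ → ℝ := fun n => 1 / ((n : ℝ) + 1)
  have hs : ∀ n, 0 < s n := fun n => Nat.one_div_pos_of_nat
  choose x hx1 hx2 using fun n => aux_near_max (T + s n • A) (s n ^ 2) (pow_pos (hs n) 2)
  have key : ∀ n, ‖T‖ ^ 2 - c * s n - s n ^ 2 ≤ ‖T (x n) + s n • A (x n)‖ ^ 2 := by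
    intro n
    have h1 := h (s n) (hs n).le
    have h2 := hx2 n
    simp only [ContinuousLinearMap.add_apply, ContinuousLinearMap.smul_apply] at h2
    linarith
  let U : Ultrafilter ℕ := Filter.hyperfilter ℕ
  have hU : (U : Filter ℕ) ≤ atTop := Nat.hyperfilter_le_atTop
  have hs0 : Tendsto s U (𝓝 0) := tendsto_one_div_add_atTop_nhds_zero_nat.mono_left hU
  obtain ⟨z, hz1, hz⟩ := aux_weak_limit hrefl U x hx1
  have hTz := aux_compact_limit T hT U x hx1 z hz
  have hAz := aux_compact_limit A hA U x hx1 z hz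
  have hge : ‖T‖ ≤ ‖T z‖ := by
    have h1 := ((hTz.add (hs0.smul hAz)).norm.pow 2)
    have h2 : Tendsto (fun n => ‖T‖ ^ 2 - c * s n - s n ^ 2) U
        (𝓝 (‖T‖ ^ 2 - c * 0 - 0 ^ 2)) :=
      (tendsto_const_nhds.sub (hs0.const_mul c)).sub (hs0.pow 2)
    have h3 := le_of_tendsto_of_tendsto' h2 h1 key
    simp at h3
    exact le_of_pow_le_pow_left₀ two_ne_zero (norm_nonneg _) h3
  have hle := T.le_opNorm z
  have hz' : ‖z‖ = 1 := by
    refine le_antisymm hz1 ?_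
    by_contra! hlt
    nlinarith
  refine ⟨z, hz', le_antisymm (by simpa [hz'] using hle) hge, fun l hl => ?_⟩
  rcases hl.eq_or_lt with rfl | hl
  · simp
    gcongr
  have h1 := ((hTz.add (hAz.const_smul l)).norm.pow 2)
  have h2 : Tendsto (fun n => ‖T‖ ^ 2 - c * l - l * s n) U (𝓝 (‖T‖ ^ 2 - c * l - l * 0)) :=
    tendsto_const_nhds.sub (hs0.const_mul l)
  have h3 : ∀ᶠ n in (U : Filter ℕ), s n ≤ l := hs0.eventually_le_const hl
  have h4 := le_of_tendsto_of_tendsto h2 h1 (by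
    filter_upwards [h3] with n hn
    have a1 := aux_convex (T (x n)) (A (x n)) (s n) l (hs n) hn
    have a2 : ‖T (x n)‖ ^ 2 ≤ ‖T‖ ^ 2 := by
      have := T.le_opNorm_of_le (hx1 n)
      rw [mul_one] at this
      gcongr
    have a3 := mul_le_mul_of_nonneg_left a2 (sub_nonneg.2 hn)
    have a4 := mul_le_mul_of_nonneg_left (key n) hl.le
    refine le_of_mul_le_mul_left ?_ (hs n)
    nlinarith)
  simpa using h4

/-- Characterization of `T ⊥_B^ε A` for compact operators on a reflexive Banach
space whose norm attainment set has the form `D ∪ (-D)` with `D` a nonempty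
compact connected subset of the unit sphere. -/
theorem approx_B_orth_iff_of_norm_attainment_symmetric_connected
    {X Y : Type*} [NormedAddCommGroup X] [NormedSpace ℝ X] [CompleteSpace X]
    [NormedAddCommGroup Y] [NormedSpace ℝ Y]
    (hrefl : Function.Surjective (NormedSpace.inclusionInDoubleDual ℝ X))
    (T A : X →L[ℝ] Y) (hT : IsCompactOperator T) (hA : IsCompactOperator A)
    (D : Set X) (hDne : D.Nonempty) (hDcpt : IsCompact D) (hDconn : IsConnected D)
    (hDsphere : D ⊆ {x : X | ‖x‖ = 1})
    (hMT : {x : X | ‖x‖ = 1 ∧ ‖T x‖ = ‖T‖} = D ∪ (-D))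
    (ε : ℝ) (hε0 : 0 ≤ ε) (hε1 : ε < 1) :
    (∀ l : ℝ, ‖T + l • A‖ ^ 2 ≥ ‖T‖ ^ 2 - 2 * ε * ‖T‖ * ‖l • A‖) ↔
      ∃ x : X, ‖x‖ = 1 ∧ ‖T x‖ = ‖T‖ ∧
        ∀ l : ℝ, ‖T x + l • A x‖ ^ 2 ≥ ‖T‖ ^ 2 - 2 * ε * ‖T‖ * ‖l • A‖ := by
  constructor
  swap
  · rintro ⟨x, hx1, -, hx⟩ l
    refine (hx l).trans ?_
    have := (T + l • A).le_opNorm x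
    rw [hx1, mul_one] at this
    simp only [ContinuousLinearMap.add_apply, ContinuousLinearMap.smul_apply] at this
    gcongr
  intro h
  have hDM : ∀ x ∈ D, ‖x‖ = 1 ∧ ‖T x‖ = ‖T‖ := by
    intro x hx
    have : x ∈ D ∪ (-D) := Or.inl hx
    rw [← hMT] at this
    exact this
  rcases (norm_nonneg T).eq_or_lt with hT0 | hT0
  · obtain ⟨x, hx⟩ := hDne
    refine ⟨x, (hDM x hx).1, (hDM x hx).2, fun l => ?_⟩
    rw [← hT0]
    simp
  set c : ℝ := 2 * ε * ‖T‖ * ‖A‖ with hc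
  have hc0 : 0 ≤ c := by positivity
  have hcl : ∀ l : ℝ, 2 * ε * ‖T‖ * ‖l • A‖ = c * |l| := by
    intro l
    rw [norm_smul, Real.norm_eq_abs, hc]; ring
  simp only [hcl] at h ⊢
  have hP := aux_half hrefl T A hT hA hT0 c (fun l hl => by
    have := h l
    rwa [abs_of_nonneg hl] at this)
  have hN := aux_half hrefl T (-A) hT (by simpa using hA.neg) hT0 c (fun l hl => by
    have := h (-l)
    rw [abs_neg, abs_of_nonneg hl] at this
    simpa using this)
  -- the closed conditions for a half-line, with a sign
  let S : ℝ → Set X := fun σ =>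
    {x | ∀ l : ℝ, 0 ≤ l → ‖T‖ ^ 2 - c * l ≤ ‖T x + (σ * l) • A x‖ ^ 2}
  have hScl : ∀ σ, IsClosed (S σ) := by
    intro σ
    simp only [S, Set.setOf_forall]
    refine isClosed_iInter fun l => isClosed_iInter fun _ => ?_
    exact isClosed_le continuous_const (by fun_prop)
  have hSneg : ∀ σ x, -x ∈ S σ → x ∈ S σ := by
    intro σ x hx l hl
    have := hx l hl
    rw [map_neg, map_neg, smul_neg, ← neg_add, norm_neg] at this
    exact this
  have hSD : ∀ σ, (∃ x : X, ‖x‖ = 1 ∧ ‖T x‖ = ‖T‖ ∧ x ∈ S σ) → (D ∩ S σ).Nonempty := by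
    rintro σ ⟨x, h1, h2, h3⟩
    have hx : x ∈ D ∪ (-D) := by
      rw [← hMT]; exact ⟨h1, h2⟩
    rcases hx with hx | hx
    · exact ⟨x, hx, h3⟩
    · exact ⟨-x, hx, hSneg σ _ (by simpa using h3)⟩
  have hP' : (D ∩ S 1).Nonempty := by
    apply hSD
    obtain ⟨x, h1, h2, h3⟩ := hP
    exact ⟨x, h1, h2, fun l hl => by simpa using h3 l hl⟩
  have hN' : (D ∩ S (-1)).Nonempty := by
    apply hSD
    obtain ⟨x, h1, h2, h3⟩ := hN
    exact ⟨x, h1, h2, fun l hl => by simpa using h3 l hl⟩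
  have hcov : D ⊆ S 1 ∪ S (-1) := by
    intro x hx
    by_contra hcon
    simp only [S, Set.mem_union, Set.mem_setOf_eq, not_or, not_forall, not_le] at hcon
    obtain ⟨⟨a, ha, ha'⟩, ⟨b, hb, hb'⟩⟩ := hcon
    have hTx := (hDM x hx).2
    have a1 : ‖T x + (1 * a) • A x‖ < ‖T‖ := by
      refine lt_of_pow_lt_pow_left₀ 2 hT0.le (ha'.trans_le ?_)
      nlinarith [mul_nonneg hc0 ha]
    have b1 : ‖T x + (-1 * b) • A x‖ < ‖T‖ := by
      refine lt_of_pow_lt_pow_left₀ 2 hT0.le (hb'.trans_le ?_)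
      nlinarith [mul_nonneg hc0 hb]
    have ha0 : 0 < a := by
      rcases ha.eq_or_lt with rfl | h0
      · simp [hTx] at a1
      · exact h0
    have e : (a + b) • T x = b • (T x + (1 * a) • A x) + a • (T x + (-1 * b) • A x) := by
      module
    have n1 := norm_add_le (b • (T x + (1 * a) • A x)) (a • (T x + (-1 * b) • A x))
    rw [← e, norm_smul, norm_smul, norm_smul, Real.norm_eq_abs, Real.norm_eq_abs,
      Real.norm_eq_abs, abs_of_nonneg (add_nonneg ha hb), abs_of_nonneg ha,
      abs_of_nonneg hb, hTx] at n1
    nlinarith [mul_le_mul_of_nonneg_left a1.le hb, mul_lt_mul_of_pos_left b1 ha0]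
  obtain ⟨x, hxD, hx1, hx2⟩ := isPreconnected_closed_iff.1 hDconn.isPreconnected _ _
    (hScl 1) (hScl (-1)) hcov hP' hN'
  refine ⟨x, (hDM x hxD).1, (hDM x hxD).2, fun l => ?_⟩
  rcases le_total 0 l with hl | hl
  · have := hx1 l hl
    rw [one_mul] at this
    rwa [abs_of_nonneg hl]
  · have := hx2 (-l) (by linarith)
    rw [neg_mul_neg, one_mul] at this
    rwa [abs_of_nonpos hl]
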